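/- Let $q$ be an odd prime power, $A = \mathbb{F}_q[t]$, $F = \mathbb{F}_q(t)$, and let $\mathfrak{p}, \mathfrak{q}, \mathfrak{l} \in A$ be distinct monic irreducible polynomials with $\deg(\mathfrak{l}) \geq 2(\deg(\mathfrak{p}) + \deg(\mathfrak{q})) - 1$. Then there exist $a \in A$ with $\deg(a) \leq \deg(\mathfrak{p}) + \deg(\mathfrak{q}) - 1$ and $c \in \mathbb{F}_q^\times$ such that the polynomial $x^2 - ax + c\mathfrak{l}$ is irreducible over each of the three completions $F_\mathfrak{p}$, $F_\mathfrak{q}$, and $F_\infty$. -/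

import Mathlib

open Polynomial IsDedekindDomain

/-- The embedding `𝔽_q[t] → F_∞ = 𝔽_q((1/t))` sending `t` to the inverse uniformizer. -/
noncomputable def infPlace (F : Type*) [Field F] : Polynomial F →+* LaurentSeries F :=
  (Polynomial.aeval (HahnSeries.single (-1 : ℤ) (1 : F))).toRingHom

lemma irred_quad_of_no_root {R K : Type*} [CommRing R] [Field K] (f : R →+* K) (a b : R)
    (h : ∀ x : K, x * x - f a * x + f b ≠ 0) :
    Irreducible ((X ^ 2 - C a * X + C b : Polynomial R).map f) := by
  have e : (X ^ 2 - C a * X + C b : Polynomial R).map f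
      = C 1 * X ^ 2 + C (-f a) * X + C (f b) := by
    simp [sub_eq_add_neg]
  rw [e]
  apply irreducible_of_degree_le_three_of_not_isRoot
  · rw [natDegree_quadratic one_ne_zero]; simp
  · intro x hx
    apply h x
    simp only [IsRoot.def, eval_add, eval_mul, eval_C, eval_pow, eval_X] at hx
    rw [← hx]; ring

lemma infPlace_coeff {F : Type*} [Field F] (p : Polynomial F) (k : ℤ) :
    (infPlace F p).coeff k = if k ≤ 0 then p.coeff k.natAbs else 0 := by
  induction p using Polynomial.induction_on' with
  | add p q hp hq =>
    rw [map_add, HahnSeries.coeff_add, hp, hq]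
    split_ifs <;> simp
  | monomial n a =>
    have : infPlace F (monomial n a) = HahnSeries.single (-(n : ℤ)) a := by
      simp only [infPlace, AlgHom.toRingHom_eq_coe, RingHom.coe_coe, aeval_monomial,
        HahnSeries.single_pow, one_pow]
      have hC : algebraMap F (LaurentSeries F) a = HahnSeries.C a := by
        rw [HahnSeries.algebraMap_apply']
        exact HahnSeries.ofPowerSeries_C a
      erw [hC]
      rw [HahnSeries.C_mul_eq_smul]
      ext j
      rw [HahnSeries.coeff_smul, HahnSeries.coeff_single, HahnSeries.coeff_single]
      simp
    rw [this, HahnSeries.coeff_single, coeff_monomial]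
    grind

lemma inf_no_root {F : Type*} [Field F] (a L : Polynomial F) (hLm : L.Monic) (c : F) (hc : c ≠ 0)
    (hd : 2 * a.natDegree < L.natDegree) (hsq : Even L.natDegree → ¬ IsSquare (-c))
    (x : LaurentSeries F) :
    x * x - infPlace F a * x + infPlace F (C c * L) ≠ 0 := by
  intro h
  have hl0 : ∀ k : ℤ, k < -(L.natDegree : ℤ) → (infPlace F (C c * L)).coeff k = 0 := by
    intro k hk
    rw [infPlace_coeff, if_pos (by omega), coeff_C_mul, coeff_eq_zero_of_natDegree_lt (by omega),
      mul_zero]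
  have hl1 : (infPlace F (C c * L)).coeff (-(L.natDegree : ℤ)) = c := by
    rw [infPlace_coeff, if_pos (by omega), coeff_C_mul]
    simp [hLm.coeff_natDegree]
  have hx : x ≠ 0 := by
    rintro rfl
    rw [mul_zero, mul_zero, sub_zero, zero_add] at h
    rw [h] at hl1
    exact hc (by simpa using hl1.symm)
  have hox : x.orderTop = ((x.order : ℤ) : WithTop ℤ) := HahnSeries.order_eq_orderTop_of_ne_zero hx |>.symm
  have hoa : ((-(a.natDegree : ℤ) : ℤ) : WithTop ℤ) ≤ (infPlace F a).orderTop := by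
    refine HahnSeries.le_orderTop_iff_forall.2 ?_
    intro k hk
    have hk' : k < -(a.natDegree : ℤ) := by exact_mod_cast hk
    rw [infPlace_coeff, if_pos (by omega), coeff_eq_zero_of_natDegree_lt (by omega)]
  have hax : ∀ k : ℤ, k < x.order - a.natDegree → (infPlace F a * x).coeff k = 0 := by
    intro k hk
    apply HahnSeries.coeff_eq_zero_of_lt_orderTop
    refine lt_of_lt_of_le ?_ HahnSeries.orderTop_add_le_mul
    rw [hox]
    refine lt_of_lt_of_le ?_ (add_le_add_left hoa _)
    norm_cast
    omega
  have hxx : ∀ k : ℤ, k < x.order + x.order → (x * x).coeff k = 0 := by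
    intro k hk
    apply HahnSeries.coeff_eq_zero_of_lt_orderTop
    refine lt_of_lt_of_le ?_ HahnSeries.orderTop_add_le_mul
    rw [hox]
    exact_mod_cast hk
  have hxx1 := HahnSeries.coeff_mul_order_add_order x x
  have hlc : x.leadingCoeff ≠ 0 := HahnSeries.leadingCoeff_ne_zero.2 hx
  have hco : ∀ k : ℤ, (x * x).coeff k - (infPlace F a * x).coeff k
      + (infPlace F (C c * L)).coeff k = 0 := by
    intro k
    rw [← HahnSeries.coeff_sub, ← HahnSeries.coeff_add, h, HahnSeries.coeff_zero]
  rcases lt_trichotomy (x.order + x.order) (-(L.natDegree : ℤ)) with hlt | heq | hgt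
  · have := hco (x.order + x.order)
    rw [hxx1, hax _ (by omega), hl0 _ hlt] at this
    simp [hlc] at this
  · have := hco (x.order + x.order)
    rw [hxx1, hax _ (by omega), heq, hl1, sub_zero] at this
    refine hsq ?_ ⟨x.leadingCoeff, ?_⟩
    · have h2 : (L.natDegree : ℤ) = (-x.order) + (-x.order) := by omega
      exact (Int.even_coe_nat _).1 ⟨_, h2⟩
    · linear_combination -this
  · have := hco (-(L.natDegree : ℤ))
    rw [hxx _ hgt, hax _ (by omega), hl1] at this
    simp [hc] at this

lemma adic_no_root {F : Type*} [Field F] (v : HeightOneSpectrum (Polynomial F))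
    (a b : Polynomial F) (h : ∀ y : Polynomial F, y * y - a * y + b ∉ v.asIdeal)
    (x : v.adicCompletion (RatFunc F)) :
    x * x - ((algebraMap (RatFunc F) (v.adicCompletion (RatFunc F))).comp
          (algebraMap (Polynomial F) (RatFunc F))) a * x +
       ((algebraMap (RatFunc F) (v.adicCompletion (RatFunc F))).comp
          (algebraMap (Polynomial F) (RatFunc F))) b ≠ 0 := by
  set f := (algebraMap (RatFunc F) (v.adicCompletion (RatFunc F))).comp
          (algebraMap (Polynomial F) (RatFunc F)) with hf
  intro hx
  have hfv : ∀ k : RatFunc F, Valued.v (algebraMap (RatFunc F) (v.adicCompletion (RatFunc F)) k)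
      = v.valuation (RatFunc F) k := fun k => v.valuedAdicCompletion_eq_valuation' k
  have hfp : ∀ p : Polynomial F, Valued.v (f p) = v.valuation (RatFunc F)
      (algebraMap (Polynomial F) (RatFunc F) p) := fun p => hfv _
  have hf1 : ∀ p : Polynomial F, Valued.v (f p) ≤ 1 := fun p => by
    rw [hfp]; exact v.valuation_le_one p
  have hx1 : Valued.v x ≤ 1 := by
    by_contra hgt
    push Not at hgt
    have e : x * x = f a * x - f b := by linear_combination hx
    have h1 : Valued.v (f a * x - f b) ≤ Valued.v x := by
      refine (Valuation.map_sub _ _ _).trans (max_le ?_ ((hf1 b).trans hgt.le))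
      rw [map_mul]
      exact mul_le_of_le_one_left' (hf1 a)
    rw [← e, map_mul] at h1
    have h0 : (0 : WithZero (Multiplicative ℤ)) < Valued.v x := lt_trans zero_lt_one hgt
    have := mul_lt_mul_of_pos_right hgt h0
    rw [one_mul] at this
    exact absurd h1 (not_le.2 this)
  obtain ⟨k, hk⟩ : ∃ k : RatFunc F,
      Valued.v (algebraMap (RatFunc F) (v.adicCompletion (RatFunc F)) k - x) < 1 := by
    have hd := HeightOneSpectrum.denseRange_algebraMap (K := RatFunc F) v
    have hn : {y : v.adicCompletion (RatFunc F) | Valued.v (y - x) < 1} ∈ nhds x := by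
      rw [Valued.mem_nhds]
      refine ⟨1, fun y hy => ?_⟩
      simpa using hy
    obtain ⟨k, hk⟩ := hd.mem_nhds hn
    exact ⟨k, hk⟩
  have hk1 : v.valuation (RatFunc F) k ≤ 1 := by
    rw [← hfv]
    have := Valuation.map_add (Valued.v : Valuation (v.adicCompletion (RatFunc F)) _)
      (algebraMap (RatFunc F) (v.adicCompletion (RatFunc F)) k - x) x
    rw [sub_add_cancel] at this
    exact this.trans (max_le hk.le hx1)
  obtain ⟨y, hy⟩ := v.exists_valuation_sub_lt_of_integer hk1 1
  rw [Units.val_one, ← hfv, map_sub] at hy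
  have hyx : Valued.v (f y - x) < 1 := by
    have e : f y - x = (f y - algebraMap (RatFunc F) (v.adicCompletion (RatFunc F)) k) +
      (algebraMap (RatFunc F) (v.adicCompletion (RatFunc F)) k - x) := by ring
    rw [e]
    exact Valuation.map_add_lt _ hy hk
  apply h y
  rw [← v.valuation_lt_one_iff_mem (K := RatFunc F), ← hfp]
  have e : f (y * y - a * y + b) = (f y - x) * (f y + x - f a) := by
    simp only [map_add, map_sub, map_mul]
    linear_combination hx
  rw [e, map_mul]
  refine mul_lt_one_of_lt_of_le hyx ?_
  refine (Valuation.map_sub _ _ _).trans (max_le ?_ (hf1 a))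
  exact (Valuation.map_add _ _ _).trans (max_le (hf1 y) hx1)

lemma exists_res {k : Type*} [Field k] [Finite k] (d : k) (hd : d ≠ 0) :
    ∃ α : k, ∀ x : k, x * x - α * x + d ≠ 0 := by
  by_contra hcon
  push Not at hcon
  have hs : Function.Surjective (fun x : k => x + d / x) := by
    intro α
    obtain ⟨x, hx⟩ := hcon α
    have hx0 : x ≠ 0 := by rintro rfl; simp [hd] at hx
    refine ⟨x, ?_⟩
    field_simp
    linear_combination hx
  have hi := Finite.injective_iff_surjective.2 hs
  -- `0` is hit by `x = 0`; its other preimages would contradict injectivity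
  obtain ⟨x, hx⟩ := hcon 0
  have hx0 : x ≠ 0 := by rintro rfl; simp [hd] at hx
  refine hx0 (hi ?_)
  simp only [div_zero, add_zero]
  field_simp
  linear_combination hx

lemma exists_local {F : Type*} [Field F] [Finite F] (P b : Polynomial F) (hP : Irreducible P)
    (hb : ¬ P ∣ b) : ∃ a : Polynomial F, ∀ r y : Polynomial F, P ∣ r - a →
      ¬ P ∣ y * y - r * y + b := by
  have := Fact.mk hP
  have : Module.Finite F (AdjoinRoot P) := (AdjoinRoot.powerBasis hP.ne_zero).finite
  have : Finite (AdjoinRoot P) := Module.finite_of_finite F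
  obtain ⟨α, hα⟩ := exists_res (AdjoinRoot.mk P b) (by rwa [Ne, AdjoinRoot.mk_eq_zero])
  obtain ⟨a, rfl⟩ := AdjoinRoot.mk_surjective α
  refine ⟨a, fun r y haa hy => hα (AdjoinRoot.mk P y) ?_⟩
  rw [← AdjoinRoot.mk_eq_mk.2 haa]
  rw [← AdjoinRoot.mk_eq_zero] at hy
  simpa using hy

/-- Let `q` be odd, and `𝔭, 𝔮, 𝔩` distinct monic irreducibles in `A = 𝔽_q[t]` with
`deg 𝔩 ≥ 2(deg 𝔭 + deg 𝔮) - 1`.  Then there are `a ∈ A` with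
`deg a ≤ deg 𝔭 + deg 𝔮 - 1` and `c ∈ 𝔽_q^×` such that `x² - a x + c𝔩` is irreducible
over each of the completions `F_𝔭`, `F_𝔮` and `F_∞`. -/
theorem exists_quadratic_irreducible_at_three_places
    (F : Type*) [Field F] [Fintype F] (hodd : Odd (Fintype.card F))
    (P Q L : Polynomial F)
    (hP : Irreducible P) (hPm : P.Monic)
    (hQ : Irreducible Q) (hQm : Q.Monic)
    (hL : Irreducible L) (hLm : L.Monic)
    (hPQ : P ≠ Q) (hPL : P ≠ L) (hQL : Q ≠ L)
    (hdeg : 2 * (P.natDegree + Q.natDegree) - 1 ≤ L.natDegree)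
    (vP vQ : HeightOneSpectrum (Polynomial F))
    (hvP : vP.asIdeal = Ideal.span {P}) (hvQ : vQ.asIdeal = Ideal.span {Q}) :
    ∃ (a : Polynomial F) (c : F), c ≠ 0 ∧
      a.natDegree ≤ P.natDegree + Q.natDegree - 1 ∧
      Irreducible ((X ^ 2 - C a * X + C (C c * L) : Polynomial (Polynomial F)).map
        ((algebraMap (RatFunc F) (vP.adicCompletion (RatFunc F))).comp
          (algebraMap (Polynomial F) (RatFunc F)))) ∧
      Irreducible ((X ^ 2 - C a * X + C (C c * L) : Polynomial (Polynomial F)).map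
        ((algebraMap (RatFunc F) (vQ.adicCompletion (RatFunc F))).comp
          (algebraMap (Polynomial F) (RatFunc F)))) ∧
      Irreducible ((X ^ 2 - C a * X + C (C c * L) : Polynomial (Polynomial F)).map
        (infPlace F)) := by
  have hchar : ringChar F ≠ 2 := by
    intro h2
    have := FiniteField.even_card_of_char_two h2
    rw [Nat.odd_iff] at hodd
    omega
  obtain ⟨c, hc, hsq⟩ : ∃ c : F, c ≠ 0 ∧ ¬ IsSquare (-c) := by
    obtain ⟨s, hs⟩ := FiniteField.exists_nonsquare hchar
    refine ⟨-s, ?_, by simpa using hs⟩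
    intro h
    apply hs
    rw [neg_eq_zero.1 h]
    exact IsSquare.zero
  have hndvd : ∀ R : Polynomial F, Irreducible R → R.Monic → R ≠ L → ¬ R ∣ C c * L := by
    intro R hR hRm hRL hd
    have hu : IsUnit (C c : Polynomial F) := isUnit_C.2 (isUnit_iff_ne_zero.2 hc)
    rw [hu.dvd_mul_left] at hd
    exact hRL (eq_of_monic_of_associated hRm hLm (hR.associated_of_dvd hL hd))
  obtain ⟨a1, h1⟩ := exists_local P (C c * L) hP (hndvd P hP hPm hPL)
  obtain ⟨a2, h2⟩ := exists_local Q (C c * L) hQ (hndvd Q hQ hQm hQL)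
  have hcop : IsCoprime P Q := by
    rw [hP.coprime_iff_not_dvd]
    intro hd
    exact hPQ (eq_of_monic_of_associated hPm hQm (hP.associated_of_dvd hQ hd))
  obtain ⟨u, w, huw⟩ := hcop
  have hPp := hP.natDegree_pos
  have hQp := hQ.natDegree_pos
  have hm : (P * Q).Monic := hPm.mul hQm
  have hmd : (P * Q).natDegree = P.natDegree + Q.natDegree := hPm.natDegree_mul hQm
  set a0 := a1 * (w * Q) + a2 * (u * P) with ha0
  set a := a0 %ₘ (P * Q) with ha
  have haeq : a + P * Q * (a0 /ₘ (P * Q)) = a0 := modByMonic_add_div a0 (P * Q)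
  have hda : a.natDegree < P.natDegree + Q.natDegree := by
    rw [← hmd]
    apply natDegree_modByMonic_lt _ hm
    intro h
    rw [h, natDegree_one] at hmd
    omega
  have hda1 : P ∣ a - a1 :=
    ⟨u * (a2 - a1) - Q * (a0 /ₘ (P * Q)), by linear_combination haeq + ha0 + a1 * huw⟩
  have hda2 : Q ∣ a - a2 :=
    ⟨w * (a1 - a2) - P * (a0 /ₘ (P * Q)), by linear_combination haeq + ha0 + a2 * huw⟩
  refine ⟨a, c, hc, by omega, ?_, ?_, ?_⟩
  · apply irred_quad_of_no_root
    apply adic_no_root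
    intro y
    rw [hvP, Ideal.mem_span_singleton]
    exact h1 a y hda1
  · apply irred_quad_of_no_root
    apply adic_no_root
    intro y
    rw [hvQ, Ideal.mem_span_singleton]
    exact h2 a y hda2
  · apply irred_quad_of_no_root
    exact inf_no_root a L hLm c hc (by omega) (fun _ => hsq)
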